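/- Suppose the oracle O satisfies: (i) O(b, A') depends only on the restriction of the bid vector b to A', and (ii) O(b, A') ≤ opt_b(A', B) for every bid vector b and every A' ⊆ A. Let S = Greedy-OM(1/2, c) with respect to the true costs c, and for each winner i ∈ S let p_i = sup{ β > 0 : i ∈ Greedy-OM(1/2, (β, c_{−i})) } be its threshold payment. Then Σ_{i∈S} p_i ≤ B; that is, the mechanism Greedy-OM(1/2) with threshold payments is budget feasible. -/

import Mathlib

open Classical

/-- Marginal value `m_i(S) = v(S ∪ {i}) - v(S)`. -/
noncomputable def marg {ι : Type*} [DecidableEq ι] (v : Finset ι → ℝ) (S : Finset ι) (i : ι) : ℝ :=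
  v (insert i S) - v S

/-- The next agent in the greedy order once the set `S` has been selected:
an agent of `Sᶜ` maximizing marginal value over bid, ties broken by the fixed linear order. -/
noncomputable def pick {ι : Type*} [Fintype ι] [LinearOrder ι] [Nonempty ι]
    (v : Finset ι → ℝ) (b : ι → ℝ) (S : Finset ι) : ι :=
  if h : Sᶜ.Nonempty then
    (Sᶜ.filter fun j => ∀ j' ∈ Sᶜ, marg v S j' / b j' ≤ marg v S j / b j).min'
      (by
        obtain ⟨j, hj, hmax⟩ := Finset.exists_max_image Sᶜ (fun j => marg v S j / b j) h
        exact ⟨j, Finset.mem_filter.mpr ⟨hj, hmax⟩⟩)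
  else Classical.arbitrary ι

/-- `greedySet v b t` is the set `S_t` of the first `t` agents in the greedy order
computed with respect to the bid vector `b`. -/
noncomputable def greedySet {ι : Type*} [Fintype ι] [LinearOrder ι] [Nonempty ι]
    (v : Finset ι → ℝ) (b : ι → ℝ) : ℕ → Finset ι
  | 0 => ∅
  | t + 1 => insert (pick v b (greedySet v b t)) (greedySet v b t)

/-- `agent v b k` is the `k`-th agent `a_k` in the greedy order (1-indexed). -/
noncomputable def agent {ι : Type*} [Fintype ι] [LinearOrder ι] [Nonempty ι]
    (v : Finset ι → ℝ) (b : ι → ℝ) (k : ℕ) : ι :=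
  pick v b (greedySet v b (k - 1))

/-- `optVal v b B A'` is the maximum of `v S` over `S ⊆ A'` with `∑_{i ∈ S} b i ≤ B`. -/
noncomputable def optVal {ι : Type*} (v : Finset ι → ℝ) (b : ι → ℝ) (B : ℝ)
    (A' : Finset ι) : ℝ :=
  sSup (v '' {S : Finset ι | S ⊆ A' ∧ ∑ i ∈ S, b i ≤ B})

/-- The greedy threshold mechanism `Greedy-TM(γ, b)`: it outputs `S_{k-1}` where `k` is the
least index with `b_{a_k} · v(S_k) > γ · B · m_{a_k}(S_{k-1})`, and all of `A` if no such `k`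
exists. -/
noncomputable def greedyTM {ι : Type*} [Fintype ι] [LinearOrder ι] [Nonempty ι]
    (v : Finset ι → ℝ) (B γ : ℝ) (b : ι → ℝ) : Finset ι :=
  if h : ∃ k, (1 ≤ k ∧ k ≤ Fintype.card ι) ∧
      b (agent v b k) * v (greedySet v b k) >
        γ * B * marg v (greedySet v b (k - 1)) (agent v b k)
  then greedySet v b (Nat.find h - 1)
  else Finset.univ

/-- The exponential-time greedy oracle mechanism `Greedy-EOM(α, b)`: it outputs `S_{k-1}` where
`k` is the least index with `v(S_k) > α · opt_b(A, B)`, and all of `A` if no such `k` exists. -/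
noncomputable def greedyEOM {ι : Type*} [Fintype ι] [LinearOrder ι] [Nonempty ι]
    (v : Finset ι → ℝ) (B α : ℝ) (b : ι → ℝ) : Finset ι :=
  if h : ∃ k, (1 ≤ k ∧ k ≤ Fintype.card ι) ∧
      v (greedySet v b k) > α * optVal v b B Finset.univ
  then greedySet v b (Nat.find h - 1)
  else Finset.univ

/-- The greedy oracle mechanism `Greedy-OM(α, b)` with oracle `O`: it outputs
`{ a_t : 1 ≤ t ≤ n, v(S_t) ≤ α · O(b, A \ {a_t}) }`. -/
noncomputable def greedyOM {ι : Type*} [Fintype ι] [LinearOrder ι] [Nonempty ι]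
    (v : Finset ι → ℝ) (O : (ι → ℝ) → Finset ι → ℝ) (α : ℝ) (b : ι → ℝ) : Finset ι :=
  ((Finset.Icc 1 (Fintype.card ι)).filter
      (fun t => v (greedySet v b t) ≤ α * O b (Finset.univ.erase (agent v b t)))).image
    (fun t => agent v b t)

/-- An allocation rule `f`, mapping bid vectors with positive entries to subsets of the agents,
is monotone if a winner remains a winner after lowering his bid. -/
def MonotoneAlloc {ι : Type*} [DecidableEq ι] (f : (ι → ℝ) → Finset ι) : Prop :=
  ∀ b : ι → ℝ, (∀ j, 0 < b j) → ∀ i ∈ f b, ∀ β : ℝ, 0 < β → β ≤ b i →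
    i ∈ f (Function.update b i β)

/-!
Let `x` be the value of the greedy prefix ending at the last winner, and suppose that agent `i`
wins with some bid `β ≥ c i`, at which moment the greedy order has selected `S`. Greedy choice
together with submodularity gives `opt ≤ v (S ∪ {i}) + (m_i(S) / β) * B`. Since `x` and
`v (S ∪ {i})` are both at most half of an optimum, `x ≤ (m_i(S) / β) * B`. Raising a bid only moves
`i` back in the greedy order, so `S` contains the set `P_i` preceding `i` under the true costs, and
`β ≤ (B / x) * m_i(P_i)`. The marginals `m_i(P_i)` telescope along the greedy order, so these bounds
add up to at most `B`. If `x = 0`, then `v = 0` and every winner wins with every bid, so that each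
payment is the junk value `0` of an unbounded supremum.
-/

section Valuation

variable {ι : Type*} [DecidableEq ι] {v : Finset ι → ℝ}

/-- Submodularity of a set function, in its lattice form; diminishing marginal values are derived
from it and monotonicity in `antitone_marg`. -/
def IsSubmodular (v : Finset ι → ℝ) : Prop :=
  ∀ S T : Finset ι, v (S ∪ T) + v (S ∩ T) ≤ v S + v T

lemma marg_nonneg (hmono : Monotone v) (S : Finset ι) (i : ι) : 0 ≤ marg v S i :=
  sub_nonneg.2 (hmono (Finset.subset_insert i S))

lemma marg_of_mem {S : Finset ι} {i : ι} (hi : i ∈ S) : marg v S i = 0 := by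
  rw [marg, Finset.insert_eq_of_mem hi, sub_self]

lemma antitone_marg (hmono : Monotone v) (hsub : IsSubmodular v) (i : ι) :
    Antitone fun S => marg v S i := by
  intro S T hST
  dsimp only
  by_cases hi : i ∈ T
  · rw [marg_of_mem hi]
    exact marg_nonneg hmono S i
  · have h := hsub (insert i S) T
    rw [Finset.insert_union, Finset.union_eq_right.2 hST, Finset.insert_inter_of_notMem hi,
      Finset.inter_eq_left.2 hST] at h
    unfold marg
    linarith

lemma union_le_add_sum_marg (hmono : Monotone v) (hsub : IsSubmodular v) (T U : Finset ι) :
    v (T ∪ U) ≤ v T + ∑ j ∈ U, marg v T j := by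
  induction U using Finset.induction_on with
  | empty => simp
  | insert a U ha ih =>
    have hmarg : v (insert a (T ∪ U)) - v (T ∪ U) ≤ marg v T a :=
      antitone_marg hmono hsub a Finset.subset_union_left
    rw [Finset.sum_insert ha, Finset.union_insert]
    linarith

lemma le_add_mul_sum_of_marg_le (hmono : Monotone v) (hsub : IsSubmodular v) {c : ι → ℝ}
    (hc : ∀ j, 0 ≤ c j) {ρ : ℝ} (hρ : 0 ≤ ρ) {T : Finset ι}
    (hT : ∀ j ∉ T, marg v T j ≤ ρ * c j) (X : Finset ι) :
    v X ≤ v T + ρ * ∑ j ∈ X, c j := by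
  have hmarg : ∀ j, marg v T j ≤ ρ * c j := by
    intro j
    by_cases hj : j ∈ T
    · rw [marg_of_mem hj]
      exact mul_nonneg hρ (hc j)
    · exact hT j hj
  calc v X ≤ v (T ∪ X) := hmono Finset.subset_union_right
    _ ≤ v T + ∑ j ∈ X, marg v T j := union_le_add_sum_marg hmono hsub T X
    _ ≤ v T + ∑ j ∈ X, ρ * c j := by gcongr with j; exact hmarg j
    _ = v T + ρ * ∑ j ∈ X, c j := by rw [Finset.mul_sum]

lemma optVal_le_of_marg_le (hmono : Monotone v) (hsub : IsSubmodular v) {c : ι → ℝ}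
    (hc : ∀ j, 0 ≤ c j) {B : ℝ} (hB : 0 ≤ B) {ρ : ℝ} (hρ : 0 ≤ ρ) {T : Finset ι}
    (hT : ∀ j ∉ T, marg v T j ≤ ρ * c j) (A' : Finset ι) :
    optVal v c B A' ≤ v T + ρ * B := by
  refine csSup_le ⟨v ∅, ∅, ⟨Finset.empty_subset A', by simpa using hB⟩, rfl⟩ ?_
  rintro _ ⟨X, ⟨-, hX⟩, rfl⟩
  calc v X ≤ v T + ρ * ∑ j ∈ X, c j := le_add_mul_sum_of_marg_le hmono hsub hc hρ hT X
    _ ≤ v T + ρ * B := by gcongr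

/-- The agents outside `S` with the largest ratio of marginal value to bid, among which the greedy
order selects the least one. -/
def densest (v : Finset ι → ℝ) (b : ι → ℝ) (S : Finset ι) : Set ι :=
  {j | j ∉ S ∧ ∀ j' ∉ S, marg v S j' / b j' ≤ marg v S j / b j}

end Valuation

section GreedyOrder

variable {ι : Type*} [Fintype ι] [LinearOrder ι] [Nonempty ι] {v : Finset ι → ℝ}

lemma isLeast_pick (v : Finset ι → ℝ) (b : ι → ℝ) {S : Finset ι} (hS : Sᶜ.Nonempty) :
    IsLeast (densest v b S) (pick v b S) := by
  have hdensest : densest v b S =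
      ↑(Sᶜ.filter fun j => ∀ j' ∈ Sᶜ, marg v S j' / b j' ≤ marg v S j / b j) := by
    ext j
    simp [densest]
  rw [pick, dif_pos hS, hdensest]
  exact Finset.isLeast_min' _ _

lemma pick_update_of_le {c : ι → ℝ} {S : Finset ι} (hS : Sᶜ.Nonempty) {i : ι}
    (hmarg : 0 ≤ marg v S i) (hci : 0 < c i) {β : ℝ} (hβ : c i ≤ β) (hne : pick v c S ≠ i) :
    pick v (Function.update c i β) S = pick v c S := by
  obtain ⟨⟨hnotMem, hmax⟩, hleast⟩ := isLeast_pick v c hS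
  have hle : ∀ j, marg v S j / Function.update c i β j ≤ marg v S j / c j := by
    intro j
    obtain rfl | hj := eq_or_ne j i
    · rw [Function.update_self]
      exact div_le_div_of_nonneg_left hmarg hci hβ
    · rw [Function.update_of_ne hj]
  refine (isLeast_pick v _ hS).unique ⟨⟨hnotMem, fun j hj => ?_⟩, fun j hj => hleast ?_⟩
  · rw [Function.update_of_ne hne]
    exact (hle j).trans (hmax j hj)
  · have hpick := hj.2 _ hnotMem
    rw [Function.update_of_ne hne] at hpick
    exact ⟨hj.1, fun k hk => (hmax k hk).trans (hpick.trans (hle j))⟩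

lemma monotone_greedySet (v : Finset ι → ℝ) (b : ι → ℝ) : Monotone (greedySet v b) :=
  monotone_nat_of_le_succ fun _ => Finset.subset_insert _ _

lemma card_greedySet (v : Finset ι → ℝ) (b : ι → ℝ) {t : ℕ} (ht : t ≤ Fintype.card ι) :
    (greedySet v b t).card = t := by
  induction t with
  | zero => rfl
  | succ t ih =>
    have hcard := ih (by omega)
    have hcompl : (greedySet v b t)ᶜ.Nonempty := by
      rw [← Finset.card_pos, Finset.card_compl]
      omega
    rw [greedySet, Finset.card_insert_of_notMem (isLeast_pick v b hcompl).1.1, hcard]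

lemma pick_greedySet_notMem (v : Finset ι → ℝ) (b : ι → ℝ) {t : ℕ} (ht : t < Fintype.card ι) :
    pick v b (greedySet v b t) ∉ greedySet v b t := by
  intro hmem
  have hsucc := card_greedySet v b (Nat.succ_le_of_lt ht)
  rw [greedySet, Finset.insert_eq_of_mem hmem, card_greedySet v b ht.le] at hsucc
  omega

lemma greedySet_card (v : Finset ι → ℝ) (b : ι → ℝ) :
    greedySet v b (Fintype.card ι) = Finset.univ :=
  (Finset.card_eq_iff_eq_univ _).1 (card_greedySet v b le_rfl)

lemma exists_mem_greedySet (v : Finset ι → ℝ) (b : ι → ℝ) (i : ι) : ∃ t, i ∈ greedySet v b t :=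
  ⟨Fintype.card ι, by simp only [greedySet_card, Finset.mem_univ]⟩

/-- The position of agent `i` in the greedy order, counted from `1`: the `t` with `a_t = i`. -/
noncomputable def greedyIndex (v : Finset ι → ℝ) (b : ι → ℝ) (i : ι) : ℕ :=
  Nat.find (exists_mem_greedySet v b i)

/-- The agents that come strictly before `i` in the greedy order: the set `S_{t-1}` for
`a_t = i`. -/
noncomputable def predecessors (v : Finset ι → ℝ) (b : ι → ℝ) (i : ι) : Finset ι :=
  greedySet v b (greedyIndex v b i - 1)

lemma mem_greedySet_iff {b : ι → ℝ} {t : ℕ} {i : ι} :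
    i ∈ greedySet v b t ↔ greedyIndex v b i ≤ t :=
  ⟨Nat.find_min' (exists_mem_greedySet v b i),
    fun h => monotone_greedySet v b h (Nat.find_spec (exists_mem_greedySet v b i))⟩

lemma greedyIndex_pos (v : Finset ι → ℝ) (b : ι → ℝ) (i : ι) : 0 < greedyIndex v b i :=
  not_le.1 fun h => Finset.notMem_empty i (mem_greedySet_iff.2 h)

lemma notMem_predecessors (v : Finset ι → ℝ) (b : ι → ℝ) (i : ι) : i ∉ predecessors v b i := by
  rw [predecessors, mem_greedySet_iff]
  have := greedyIndex_pos v b i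
  omega

lemma greedySet_greedyIndex (v : Finset ι → ℝ) (b : ι → ℝ) (i : ι) :
    greedySet v b (greedyIndex v b i) =
      insert (pick v b (predecessors v b i)) (predecessors v b i) := by
  rw [← Nat.sub_add_cancel (greedyIndex_pos v b i)]
  rfl

lemma pick_predecessors (v : Finset ι → ℝ) (b : ι → ℝ) (i : ι) :
    pick v b (predecessors v b i) = i := by
  have hmem : i ∈ greedySet v b (greedyIndex v b i) := mem_greedySet_iff.2 le_rfl
  rw [greedySet_greedyIndex, Finset.mem_insert] at hmem
  exact (hmem.resolve_right (notMem_predecessors v b i)).symm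

lemma insert_predecessors (v : Finset ι → ℝ) (b : ι → ℝ) (i : ι) :
    insert i (predecessors v b i) = greedySet v b (greedyIndex v b i) := by
  rw [greedySet_greedyIndex, pick_predecessors]

lemma predecessors_pick {b : ι → ℝ} {t : ℕ}
    (ht : pick v b (greedySet v b t) ∉ greedySet v b t) :
    predecessors v b (pick v b (greedySet v b t)) = greedySet v b t := by
  have hle : greedyIndex v b (pick v b (greedySet v b t)) ≤ t + 1 :=
    mem_greedySet_iff.1 (Finset.mem_insert_self _ _)
  rw [mem_greedySet_iff] at ht
  rw [predecessors]
  congr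
  omega

lemma marg_predecessors_le {b : ι → ℝ} {i j : ι} (hj : j ∉ predecessors v b i) (hbj : 0 < b j) :
    marg v (predecessors v b i) j ≤ marg v (predecessors v b i) i / b i * b j := by
  have hmax := (isLeast_pick v b ⟨j, Finset.mem_compl.2 hj⟩).1.2 j hj
  rwa [pick_predecessors, div_le_iff₀ hbj] at hmax

lemma sum_marg_predecessors (v : Finset ι → ℝ) (b : ι → ℝ) (t : ℕ) :
    ∑ i ∈ greedySet v b t, marg v (predecessors v b i) i = v (greedySet v b t) - v ∅ := by
  induction t with
  | zero => simp [greedySet]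
  | succ t ih =>
    rw [greedySet]
    by_cases hmem : pick v b (greedySet v b t) ∈ greedySet v b t
    · rw [Finset.insert_eq_of_mem hmem, ih]
    · rw [Finset.sum_insert hmem, ih, predecessors_pick hmem, marg, sub_add_sub_cancel]

lemma greedySet_update_of_lt (hmono : Monotone v) {c : ι → ℝ} {i : ι} (hci : 0 < c i) {β : ℝ}
    (hβ : c i ≤ β) {t : ℕ} (ht : t < greedyIndex v c i) :
    greedySet v (Function.update c i β) t = greedySet v c t := by
  induction t with
  | zero => rfl
  | succ t ih =>
    have hnotMem : i ∉ greedySet v c (t + 1) := by rwa [mem_greedySet_iff, not_le]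
    rw [greedySet, Finset.mem_insert, not_or] at hnotMem
    rw [greedySet, greedySet, ih (by omega),
      pick_update_of_le ⟨i, Finset.mem_compl.2 hnotMem.2⟩ (marg_nonneg hmono _ i) hci hβ
        (Ne.symm hnotMem.1)]

lemma predecessors_subset_update (hmono : Monotone v) {c : ι → ℝ} {i : ι} (hci : 0 < c i)
    {β : ℝ} (hβ : c i ≤ β) :
    predecessors v c i ⊆ predecessors v (Function.update c i β) i := by
  have hprefix : greedySet v (Function.update c i β) (greedyIndex v c i - 1) =
      predecessors v c i :=
    greedySet_update_of_lt hmono hci hβ (Nat.sub_one_lt (greedyIndex_pos v c i).ne')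
  have hnotMem := notMem_predecessors v c i
  rw [← hprefix, mem_greedySet_iff] at hnotMem
  rw [← hprefix]
  exact monotone_greedySet v _ (by omega)

end GreedyOrder

section Payment

variable {ι : Type*} [DecidableEq ι]

/-- The threshold payment of agent `i` under the allocation rule `f`. When `i` wins with arbitrarily
high bids the supremum is infinite and the value is the junk `0`. -/
noncomputable def thresholdPayment (f : (ι → ℝ) → Finset ι) (c : ι → ℝ) (i : ι) : ℝ :=
  sSup {β : ℝ | 0 < β ∧ i ∈ f (Function.update c i β)}

lemma oracle_update_erase [Fintype ι] {O : (ι → ℝ) → Finset ι → ℝ}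
    (hOdep : ∀ A' : Finset ι, DependsOn (fun b => O b A') A') (c : ι → ℝ) (i : ι) (β : ℝ) :
    O (Function.update c i β) (Finset.univ.erase i) = O c (Finset.univ.erase i) :=
  hOdep _ fun _ hj => Function.update_of_ne (Finset.ne_of_mem_erase hj) _ _

end Payment

lemma two_mul_le_of_le_mul {α x y : ℝ} (hα : 0 < α) (hα' : α ≤ 1 / 2) (hx : 0 ≤ x)
    (hxy : x ≤ α * y) : 2 * x ≤ y := by
  have hy : 0 ≤ y := nonneg_of_mul_nonneg_right (hx.trans hxy) hα
  have : α * y ≤ 1 / 2 * y := by gcongr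
  linarith

section Mechanism

variable {ι : Type*} [Fintype ι] [LinearOrder ι] [Nonempty ι] {v : Finset ι → ℝ}
  {O : (ι → ℝ) → Finset ι → ℝ} {α B : ℝ} {c : ι → ℝ}

lemma mem_greedyOM_iff {b : ι → ℝ} {i : ι} :
    i ∈ greedyOM v O α b ↔
      v (insert i (predecessors v b i)) ≤ α * O b (Finset.univ.erase i) := by
  simp only [greedyOM, Finset.mem_image, Finset.mem_filter, Finset.mem_Icc]
  constructor
  · rintro ⟨t, ⟨⟨ht, htn⟩, hvalue⟩, rfl⟩
    obtain ⟨s, rfl⟩ := Nat.exists_eq_add_of_le' ht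
    rwa [agent, Nat.add_sub_cancel, predecessors_pick (pick_greedySet_notMem v b htn)]
  · intro hvalue
    have hagent : agent v b (greedyIndex v b i) = i := pick_predecessors v b i
    have hle : greedyIndex v b i ≤ Fintype.card ι :=
      mem_greedySet_iff.1 (by simp only [greedySet_card, Finset.mem_univ])
    refine ⟨greedyIndex v b i, ⟨⟨greedyIndex_pos v b i, hle⟩, ?_⟩, hagent⟩
    rwa [hagent, ← insert_predecessors]

lemma optVal_le_of_update (hmono : Monotone v) (hsub : IsSubmodular v) (hB : 0 ≤ B)
    (hc : ∀ j, 0 < c j) {i : ι} {β : ℝ} (hβ : 0 < β) (A' : Finset ι) :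
    optVal v c B A' ≤ v (insert i (predecessors v (Function.update c i β) i)) +
      marg v (predecessors v (Function.update c i β) i) i / β * B := by
  refine optVal_le_of_marg_le hmono hsub (fun j => (hc j).le) hB
    (div_nonneg (marg_nonneg hmono _ i) hβ.le) (fun j hj => ?_) A'
  rw [Finset.mem_insert, not_or] at hj
  have hupdate : Function.update c i β j = c j := Function.update_of_ne hj.1 β c
  have hdensity := marg_predecessors_le hj.2 (hupdate.symm ▸ hc j)
  rw [Function.update_self, hupdate] at hdensity
  exact (antitone_marg hmono hsub j (Finset.subset_insert i _)).trans hdensity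

lemma mul_le_of_mem_greedyOM_update (hv0 : v ∅ = 0) (hmono : Monotone v) (hsub : IsSubmodular v)
    (hB : 0 ≤ B) (hα : 0 < α) (hα' : α ≤ 1 / 2) (hc : ∀ j, 0 < c j)
    (hOdep : ∀ A' : Finset ι, DependsOn (fun b => O b A') A')
    (hOopt : ∀ A' : Finset ι, O c A' ≤ optVal v c B A')
    {x : ℝ} {A' : Finset ι} (hx : 2 * x ≤ optVal v c B A') {i : ι} {β : ℝ} (hβ : c i ≤ β)
    (hi : i ∈ greedyOM v O α (Function.update c i β)) :
    β * x ≤ B * marg v (predecessors v c i) i := by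
  have hβ0 : 0 < β := (hc i).trans_le hβ
  set P := predecessors v (Function.update c i β) i with hP
  rw [mem_greedyOM_iff, oracle_update_erase hOdep, ← hP] at hi
  have hnonneg : 0 ≤ v (insert i P) := hv0 ▸ hmono (Finset.empty_subset _)
  have hhalf : 2 * v (insert i P) ≤ optVal v c B (Finset.univ.erase i) :=
    (two_mul_le_of_le_mul hα hα' hnonneg hi).trans (hOopt _)
  have hopt : ∀ A', optVal v c B A' ≤ v (insert i P) + marg v P i / β * B :=
    optVal_le_of_update hmono hsub hB hc hβ0
  have hxle : x ≤ marg v P i / β * B := by linarith [hopt A', hopt (Finset.univ.erase i)]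
  calc β * x ≤ β * (marg v P i / β * B) := by gcongr
    _ = B * marg v P i := by field_simp
    _ ≤ B * marg v (predecessors v c i) i := mul_le_mul_of_nonneg_left
        (antitone_marg hmono hsub i (predecessors_subset_update hmono (hc i) hβ)) hB

lemma thresholdPayment_greedyOM_le (hv0 : v ∅ = 0) (hmono : Monotone v) (hsub : IsSubmodular v)
    (hB : 0 ≤ B) (hα : 0 < α) (hα' : α ≤ 1 / 2) (hc : ∀ j, 0 < c j)
    (hOdep : ∀ A' : Finset ι, DependsOn (fun b => O b A') A')
    (hOopt : ∀ A' : Finset ι, O c A' ≤ optVal v c B A')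
    {x : ℝ} (hx0 : 0 < x) {A' : Finset ι} (hx : 2 * x ≤ optVal v c B A') {i : ι}
    (hi : i ∈ greedyOM v O α c) :
    thresholdPayment (greedyOM v O α) c i ≤ B / x * marg v (predecessors v c i) i := by
  have hbid : ∀ β, c i ≤ β → i ∈ greedyOM v O α (Function.update c i β) →
      β * x ≤ B * marg v (predecessors v c i) i := fun β =>
    mul_le_of_mem_greedyOM_update hv0 hmono hsub hB hα hα' hc hOdep hOopt hx
  refine Real.sSup_le ?_ (mul_nonneg (div_nonneg hB hx0.le) (marg_nonneg hmono _ i))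
  rintro β ⟨-, hβ⟩
  rw [div_mul_eq_mul_div, le_div_iff₀ hx0]
  rcases le_total (c i) β with hle | hle
  · exact hbid β hle hβ
  · exact (mul_le_mul_of_nonneg_right hle hx0.le).trans
      (hbid (c i) le_rfl (by rwa [Function.update_eq_self]))

lemma eq_zero_of_value_insert_predecessors_eq_zero (hv0 : v ∅ = 0) (hmono : Monotone v)
    (hsub : IsSubmodular v) (hc : ∀ j, 0 < c j) {i : ι}
    (hi : v (insert i (predecessors v c i)) = 0) : v = 0 := by
  have hnonneg : ∀ X, 0 ≤ v X := fun X => hv0 ▸ hmono (Finset.empty_subset X)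
  have hpred : v (predecessors v c i) = 0 :=
    le_antisymm (hi ▸ hmono (Finset.subset_insert i _)) (hnonneg _)
  have hmarg : ∀ j ∉ predecessors v c i, marg v (predecessors v c i) j ≤ 0 * c j := by
    intro j hj
    simpa [marg, hi, hpred] using marg_predecessors_le hj (hc j)
  funext X
  have hle := le_add_mul_sum_of_marg_le hmono hsub (fun j => (hc j).le) le_rfl hmarg X
  rw [hpred, zero_mul, add_zero] at hle
  exact le_antisymm hle (hnonneg X)

lemma thresholdPayment_greedyOM_zero
    (hOdep : ∀ A' : Finset ι, DependsOn (fun b => O b A') A') {i : ι}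
    (hi : i ∈ greedyOM 0 O α c) : thresholdPayment (greedyOM 0 O α) c i = 0 := by
  have hwins : ∀ β, i ∈ greedyOM 0 O α (Function.update c i β) := by
    intro β
    rw [mem_greedyOM_iff] at hi ⊢
    rwa [oracle_update_erase hOdep]
  have hset : {β : ℝ | 0 < β ∧ i ∈ greedyOM 0 O α (Function.update c i β)} = Set.Ioi 0 :=
    Set.ext fun β => and_iff_left (hwins β)
  rw [thresholdPayment, hset]
  exact Real.sSup_of_not_bddAbove (not_bddAbove_Ioi 0)

lemma exists_greedyOM_subset_insert_predecessors (h : (greedyOM v O α c).Nonempty) :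
    ∃ i ∈ greedyOM v O α c, greedyOM v O α c ⊆ insert i (predecessors v c i) := by
  obtain ⟨i, hi, hlast⟩ := Finset.exists_max_image _ (greedyIndex v c) h
  refine ⟨i, hi, fun j hj => ?_⟩
  rw [insert_predecessors, mem_greedySet_iff]
  exact hlast j hj

end Mechanism

theorem greedyOM_budget_feasible_general {ι : Type*} [Fintype ι] [LinearOrder ι] [Nonempty ι]
    {v : Finset ι → ℝ} (hv0 : v ∅ = 0) (hmono : Monotone v) (hsub : IsSubmodular v)
    {B : ℝ} (hB : 0 < B) {α : ℝ} (hα : 0 < α) (hα' : α ≤ 1 / 2)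
    {c : ι → ℝ} (hc : ∀ i, 0 < c i) {O : (ι → ℝ) → Finset ι → ℝ}
    (hOdep : ∀ A' : Finset ι, DependsOn (fun b => O b A') A')
    (hOopt : ∀ A' : Finset ι, O c A' ≤ optVal v c B A') :
    ∑ i ∈ greedyOM v O α c, thresholdPayment (greedyOM v O α) c i ≤ B := by
  obtain hempty | hwinners := (greedyOM v O α c).eq_empty_or_nonempty
  · simpa only [hempty, Finset.sum_empty] using hB.le
  obtain ⟨l, hl, hsubset⟩ := exists_greedyOM_subset_insert_predecessors hwinners
  set x := v (insert l (predecessors v c l)) with hx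
  have hx0 : 0 ≤ x := hv0 ▸ hmono (Finset.empty_subset _)
  obtain hzero | hpos := hx0.eq_or_lt
  · obtain rfl := eq_zero_of_value_insert_predecessors_eq_zero hv0 hmono hsub hc hzero.symm
    rw [Finset.sum_eq_zero fun i => thresholdPayment_greedyOM_zero hOdep]
    exact hB.le
  have hhalf : 2 * x ≤ optVal v c B (Finset.univ.erase l) :=
    (two_mul_le_of_le_mul hα hα' hx0 (mem_greedyOM_iff.1 hl)).trans (hOopt _)
  calc ∑ i ∈ greedyOM v O α c, thresholdPayment (greedyOM v O α) c i
      ≤ ∑ i ∈ greedyOM v O α c, B / x * marg v (predecessors v c i) i :=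
        Finset.sum_le_sum fun i =>
          thresholdPayment_greedyOM_le hv0 hmono hsub hB.le hα hα' hc hOdep hOopt hpos hhalf
    _ ≤ ∑ i ∈ insert l (predecessors v c l), B / x * marg v (predecessors v c i) i :=
        Finset.sum_le_sum_of_subset_of_nonneg hsubset fun i _ _ =>
          mul_nonneg (div_nonneg hB.le hx0) (marg_nonneg hmono _ i)
    _ = B := by
        rw [← Finset.mul_sum, insert_predecessors, sum_marg_predecessors, ← insert_predecessors,
          hv0, sub_zero, ← hx, div_mul_cancel₀ B hpos.ne']

/-- `Greedy-OM(1/2)` with threshold payments is budget feasible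
(Lemma 4.7). -/
theorem greedyOM_budget_feasible {ι : Type*} [Fintype ι] [LinearOrder ι] [Nonempty ι]
    (v : Finset ι → ℝ) (hv0 : v (∅ : Finset ι) = 0)
    (hvmono : ∀ S T : Finset ι, S ⊆ T → v S ≤ v T)
    (hvsub : ∀ S T : Finset ι, v (S ∪ T) + v (S ∩ T) ≤ v S + v T)
    (B : ℝ) (hB : 0 < B)
    (c : ι → ℝ) (hc : ∀ i, 0 < c i) (hcB : ∀ i, c i ≤ B)
    (O : (ι → ℝ) → Finset ι → ℝ)
    (hO1 : ∀ (b b' : ι → ℝ) (A' : Finset ι), (∀ j ∈ A', b j = b' j) → O b A' = O b' A')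
    (hO2 : ∀ (b : ι → ℝ) (A' : Finset ι), O b A' ≤ optVal v b B A') :
    ∑ i ∈ greedyOM v O (1 / 2) c,
      sSup {β : ℝ | 0 < β ∧ i ∈ greedyOM v O (1 / 2) (Function.update c i β)} ≤ B :=
  greedyOM_budget_feasible_general hv0 (fun S T => hvmono S T) hvsub hB (by norm_num) le_rfl hc
    (fun A' b b' => hO1 b b' A') (hO2 c)
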